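/- Two-state Lax–Friedrichs-type estimate (Corollary 2.5): Let d ∈ {1,2,3}, let U, Ũ ∈ 𝒢 with magnetic fields B, B̃, and let ξ ∈ ℝ^d be a unit vector. For every α ≥ α_⋆(U, Ũ; ξ) and every α̃ ≥ α_⋆(Ũ, U; ξ), one has α + α̃ > 0, and the state Ū = (α + α̃)⁻¹ (αU − ⟨ξ, F(U)⟩ + α̃Ũ + ⟨ξ, F(Ũ)⟩) has positive density component and satisfies, for all v*, B* ∈ ℝ³, Ū·n* + |B*|²/2 + (v*·B*)(α + α̃)⁻¹(⟨ξ, B⟩ − ⟨ξ, B̃⟩) ≥ 0. Furthermore, if ⟨ξ, B⟩ = ⟨ξ, B̃⟩ then Ū ∈ cl(𝒢*). -/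

import Mathlib

noncomputable section

open Finset

/-- An MHD state `U = (ρ, m, B, E)` viewed as a vector in `ℝ⁸`. -/
abbrev MHDState := Fin 8 → ℝ

namespace MHD

/-- Build a state from density, momentum, magnetic field, total energy. -/
def mk (ρ : ℝ) (m B : Fin 3 → ℝ) (E : ℝ) : MHDState :=
  ![ρ, m 0, m 1, m 2, B 0, B 1, B 2, E]

/-- Density component. -/
def dens (U : MHDState) : ℝ := U 0

/-- Momentum components. -/
def mom (U : MHDState) : Fin 3 → ℝ := ![U 1, U 2, U 3]

/-- Magnetic field components. -/
def magB (U : MHDState) : Fin 3 → ℝ := ![U 4, U 5, U 6]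

/-- Total energy component. -/
def toten (U : MHDState) : ℝ := U 7

/-- Euclidean dot product on `ℝ³`. -/
def dot3 (a b : Fin 3 → ℝ) : ℝ := ∑ k, a k * b k

/-- Squared Euclidean norm on `ℝ³`. -/
def sq3 (a : Fin 3 → ℝ) : ℝ := dot3 a a

/-- Euclidean norm on `ℝ³`. -/
def norm3 (a : Fin 3 → ℝ) : ℝ := Real.sqrt (sq3 a)

/-- Velocity `v = m / ρ`. -/
def vel (U : MHDState) : Fin 3 → ℝ := fun k => mom U k / dens U

/-- Internal energy `𝓔(U) = E − (|m|²/ρ + |B|²)/2`. -/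
def intE (U : MHDState) : ℝ := toten U - (sq3 (mom U) / dens U + sq3 (magB U)) / 2

/-- Specific internal energy `e = 𝓔(U)/ρ`. -/
def specE (U : MHDState) : ℝ := intE U / dens U

/-- The admissible state set `𝒢`. -/
def Gset : Set MHDState := {U | 0 < dens U ∧ 0 < intE U}

/-- The set `𝒢_ρ` of states with positive density. -/
def Grho : Set MHDState := {U | 0 < dens U}

/-- Euclidean dot product on `ℝ⁸`. -/
def dot8 (U V : MHDState) : ℝ := ∑ i, U i * V i

/-- The vector `n* = (|v*|²/2, −v*, −B*, 1)`. -/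
def nstar (vs Bs : Fin 3 → ℝ) : MHDState :=
  mk (sq3 vs / 2) (fun k => -vs k) (fun k => -Bs k) 1

/-- The set `𝒢*`. -/
def GstarSet : Set MHDState :=
  {U | 0 < dens U ∧ ∀ vs Bs : Fin 3 → ℝ, 0 < dot8 U (nstar vs Bs) + sq3 Bs / 2}

/-- Equation of state assumption: for `ρ > 0`, `e > 0 ↔ p(ρ,e) > 0`. -/
def IsEOS (pfun : ℝ → ℝ → ℝ) : Prop :=
  ∀ ρ e : ℝ, 0 < ρ → (0 < e ↔ 0 < pfun ρ e)

/-- Pressure of a state, via the equation of state. -/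
def pres (pfun : ℝ → ℝ → ℝ) (U : MHDState) : ℝ := pfun (dens U) (specE U)

/-- Total pressure `p + |B|²/2`. -/
def ptot (pfun : ℝ → ℝ → ℝ) (U : MHDState) : ℝ := pres pfun U + sq3 (magB U) / 2

/-- The `i`-th flux `F_i(U)`. -/
def flux (pfun : ℝ → ℝ → ℝ) (i : Fin 3) (U : MHDState) : MHDState :=
  mk (dens U * vel U i)
    (fun k => dens U * vel U i * vel U k - magB U i * magB U k
      + ptot pfun U * (if k = i then 1 else 0))
    (fun k => vel U i * magB U k - magB U i * vel U k)
    (vel U i * (toten U + ptot pfun U) - magB U i * dot3 (vel U) (magB U))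

/-- Directional inner product `⟨ξ, w⟩ = Σ_{k<d} ξ_k w_k` for `ξ ∈ ℝ^d`, `w ∈ ℝ³`, `d ≤ 3`. -/
def dirDot {d : ℕ} (hd : d ≤ 3) (ξ : Fin d → ℝ) (w : Fin 3 → ℝ) : ℝ :=
  ∑ k, ξ k * w (Fin.castLE hd k)

/-- Directional flux `⟨ξ, F(U)⟩ = Σ_{i<d} ξ_i F_i(U)`. -/
def dirFlux (pfun : ℝ → ℝ → ℝ) {d : ℕ} (hd : d ≤ 3) (ξ : Fin d → ℝ) (U : MHDState) :
    MHDState :=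
  ∑ i, ξ i • flux pfun (Fin.castLE hd i) U

/-- `ξ` is a unit vector. -/
def unitVec {d : ℕ} (ξ : Fin d → ℝ) : Prop := (∑ k, (ξ k) ^ 2) = 1

/-- `𝒞_s(U) = p / (ρ √(2e))`. -/
def soundC (pfun : ℝ → ℝ → ℝ) (U : MHDState) : ℝ :=
  pres pfun U / (dens U * Real.sqrt (2 * specE U))

/-- `𝒞(U; ξ)`. -/
def waveC (pfun : ℝ → ℝ → ℝ) {d : ℕ} (hd : d ≤ 3) (ξ : Fin d → ℝ) (U : MHDState) : ℝ :=
  Real.sqrt ((soundC pfun U ^ 2 + sq3 (magB U) / dens U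
    + Real.sqrt ((soundC pfun U ^ 2 + sq3 (magB U) / dens U) ^ 2
      - 4 * soundC pfun U ^ 2 * dirDot hd ξ (magB U) ^ 2 / dens U)) / 2)

/-- Roe-type averaged velocity `v̄ = (√ρ v + √ρ̃ ṽ)/(√ρ + √ρ̃)`. -/
def roeV (U Ut : MHDState) : Fin 3 → ℝ := fun k =>
  (Real.sqrt (dens U) * vel U k + Real.sqrt (dens Ut) * vel Ut k)
    / (Real.sqrt (dens U) + Real.sqrt (dens Ut))

/-- `α_r(U, Ũ; ξ)`. -/
def alphaR (pfun : ℝ → ℝ → ℝ) {d : ℕ} (hd : d ≤ 3) (ξ : Fin d → ℝ) (U Ut : MHDState) : ℝ :=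
  max (dirDot hd ξ (vel U)) (dirDot hd ξ (roeV U Ut)) + waveC pfun hd ξ U
    + norm3 (magB U - magB Ut) / (Real.sqrt (dens U) + Real.sqrt (dens Ut))

/-- `α_l(U, Ũ; ξ)`. -/
def alphaL (pfun : ℝ → ℝ → ℝ) {d : ℕ} (hd : d ≤ 3) (ξ : Fin d → ℝ) (U Ut : MHDState) : ℝ :=
  min (dirDot hd ξ (vel U)) (dirDot hd ξ (roeV U Ut)) - waveC pfun hd ξ U
    - norm3 (magB U - magB Ut) / (Real.sqrt (dens U) + Real.sqrt (dens Ut))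

/-- `α_⋆(U, Ũ; ξ)`. -/
def alphaS (pfun : ℝ → ℝ → ℝ) {d : ℕ} (hd : d ≤ 3) (ξ : Fin d → ℝ) (U Ut : MHDState) : ℝ :=
  max (|dirDot hd ξ (vel U)|) (|dirDot hd ξ (roeV U Ut)|) + waveC pfun hd ξ U
    + norm3 (magB U - magB Ut) / (Real.sqrt (dens U) + Real.sqrt (dens Ut))

/-- The vector `θ(U, v*, B*) = 2^{−1/2}(B − B*, √ρ(v − v*), √(2ρe)) ∈ ℝ⁷`. -/
def theta (U : MHDState) (vs Bs : Fin 3 → ℝ) : Fin 7 → ℝ :=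
  ![(magB U 0 - Bs 0) / Real.sqrt 2,
    (magB U 1 - Bs 1) / Real.sqrt 2,
    (magB U 2 - Bs 2) / Real.sqrt 2,
    Real.sqrt (dens U) * (vel U 0 - vs 0) / Real.sqrt 2,
    Real.sqrt (dens U) * (vel U 1 - vs 1) / Real.sqrt 2,
    Real.sqrt (dens U) * (vel U 2 - vs 2) / Real.sqrt 2,
    Real.sqrt (2 * intE U) / Real.sqrt 2]

/-- `|θ|²`. -/
def thetaSq (U : MHDState) (vs Bs : Fin 3 → ℝ) : ℝ := ∑ k, theta U vs Bs k ^ 2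

/-- Godunov–Powell source vector `S(U) = (0, B, v, v·B)`. -/
def source (U : MHDState) : MHDState := mk 0 (magB U) (vel U) (dot3 (vel U) (magB U))

/-- HLL numerical flux with clamped wave speeds `σm ≤ 0 ≤ σp`. -/
def hllFlux (pfun : ℝ → ℝ → ℝ) {d : ℕ} (hd : d ≤ 3) (ξ : Fin d → ℝ)
    (Um Up : MHDState) (σm σp : ℝ) : MHDState :=
  (σp - σm)⁻¹ • (σp • dirFlux pfun hd ξ Um - σm • dirFlux pfun hd ξ Up
    + (σm * σp) • (Up - Um))

/-- HLL intermediate state `H(U⁻, U⁺; ξ)`. -/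
def hllMid (pfun : ℝ → ℝ → ℝ) {d : ℕ} (hd : d ≤ 3) (ξ : Fin d → ℝ)
    (Um Up : MHDState) (σm σp : ℝ) : MHDState :=
  (σp - σm)⁻¹ • (σp • Up - dirFlux pfun hd ξ Up - σm • Um + dirFlux pfun hd ξ Um)

/-- The quantity `α̂_j` of Theorem 2.3. -/
def alphaHat (pfun : ℝ → ℝ → ℝ) {d : ℕ} (hd : d ≤ 3) {N : ℕ}
    (s : Fin N → ℝ) (ξ : Fin N → Fin d → ℝ) (U : Fin N → MHDState) (j : Fin N) : ℝ :=
  max (dirDot hd (ξ j) (vel (U j)))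
      ((∑ i, s i)⁻¹ * ∑ i, s i * dirDot hd (fun k => ξ j k - ξ i k) (roeV (U j) (U i)))
  + waveC pfun hd (ξ j) (U j)
  + 2 * (∑ i, s i)⁻¹ * ∑ i, s i *
      (norm3 (magB (U j) - magB (U i)) / (Real.sqrt (dens (U j)) + Real.sqrt (dens (U i))))

def d1le3 : (1 : ℕ) ≤ 3 := by omega
def d2le3 : (2 : ℕ) ≤ 3 := by omega

/-- In one dimension the direction `ξ = 1`. -/
def xi1 : Fin 1 → ℝ := fun _ => 1

section Euclidean

variable (a b c : Fin 3 → ℝ)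

lemma sq3_nonneg : 0 ≤ sq3 a := by
  unfold sq3 dot3
  exact Finset.sum_nonneg fun _ _ => mul_self_nonneg _

lemma dot3_sq_le : dot3 a b ^ 2 ≤ sq3 a * sq3 b := by
  have h := Finset.sum_mul_sq_le_sq_mul_sq Finset.univ a b
  simpa only [dot3, sq3, pow_two] using h

lemma sq_norm3 : norm3 a ^ 2 = sq3 a :=
  Real.sq_sqrt (sq3_nonneg a)

lemma norm3_nonneg : 0 ≤ norm3 a :=
  Real.sqrt_nonneg _

lemma abs_dot3_le : |dot3 a b| ≤ norm3 a * norm3 b := by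
  refine abs_le_of_sq_le_sq ?_ (mul_nonneg (norm3_nonneg a) (norm3_nonneg b))
  rw [mul_pow, sq_norm3, sq_norm3]
  exact dot3_sq_le a b

lemma norm3_sub_comm : norm3 (a - b) = norm3 (b - a) := by
  unfold norm3 sq3 dot3
  congr 1
  exact Finset.sum_congr rfl fun k _ => by simp only [Pi.sub_apply]; ring

/-- Cauchy–Schwarz for the components orthogonal to a unit vector. -/
lemma orthogonal_dot3_sq_le {x : Fin 3 → ℝ} (hx : sq3 x = 1) :
    (dot3 b c - dot3 x b * dot3 x c) ^ 2
      ≤ (sq3 b - dot3 x b ^ 2) * (sq3 c - dot3 x c ^ 2) := by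
  have h := dot3_sq_le (fun k => b k - dot3 x b * x k) (fun k => c k - dot3 x c * x k)
  have key : ∀ u v : Fin 3 → ℝ,
      dot3 (fun k => u k - dot3 x u * x k) (fun k => v k - dot3 x v * x k)
        = dot3 u v - dot3 x u * dot3 x v := by
    intro u v
    simp only [sq3, dot3, Fin.sum_univ_three] at hx ⊢
    linear_combination ((x 0 * u 0 + x 1 * u 1 + x 2 * u 2) *
      (x 0 * v 0 + x 1 * v 1 + x 2 * v 2)) * hx
  rw [sq3, sq3, key, key, key] at h
  simpa only [sq3, pow_two] using h

end Euclidean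

/-- The quadratic form governing the fast magnetosonic wave, with `C ^ 2` the larger root of
`(l - a ^ 2) * (l - |b| ^ 2) = a ^ 2 * (|b| ^ 2 - (x · b) ^ 2)`. -/
lemma fast_wave_form_le {x : Fin 3 → ℝ} (hx : sq3 x = 1) (a s C : ℝ) (b c w : Fin 3 → ℝ)
    (hC : 0 ≤ C) (ha : a ^ 2 ≤ C ^ 2) (hb : sq3 b ≤ C ^ 2)
    (hroot : (C ^ 2 - a ^ 2) * (C ^ 2 - sq3 b) = a ^ 2 * (sq3 b - dot3 x b ^ 2)) :
    |a * s * dot3 x w + dot3 b c * dot3 x w - dot3 x b * dot3 w c|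
      ≤ C * ((sq3 c + sq3 w + s ^ 2) / 2) := by
  set g := dot3 x b with hg
  set t := a * s + dot3 b c with ht
  let M : Fin 3 → ℝ := fun k => t * x k - g * c k
  have hform : a * s * dot3 x w + dot3 b c * dot3 x w - g * dot3 w c = dot3 w M := by
    simp only [M, ht]
    generalize g = g'
    simp only [dot3, Fin.sum_univ_three]
    ring
  have hM : sq3 M = t ^ 2 - 2 * t * g * dot3 x c + g ^ 2 * sq3 c := by
    simp only [M]
    generalize t = t', g = g'
    simp only [sq3, dot3, Fin.sum_univ_three] at hx ⊢
    linear_combination t' ^ 2 * hx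
  have hort := orthogonal_dot3_sq_le b c hx
  rw [← hg] at hort
  have hX : 0 ≤ sq3 c - dot3 x c ^ 2 := by
    have := dot3_sq_le x c
    rw [hx] at this
    linarith
  set X := sq3 c - dot3 x c ^ 2 with hXdef
  set τ := dot3 b c - g * dot3 x c with hτ
  have hcross : 2 * (a * s * τ) ≤ (C ^ 2 - a ^ 2) * s ^ 2 + (C ^ 2 - sq3 b) * X := by
    have hp : 0 ≤ (C ^ 2 - a ^ 2) * s ^ 2 := mul_nonneg (by linarith) (sq_nonneg s)
    have hq : 0 ≤ (C ^ 2 - sq3 b) * X := mul_nonneg (by linarith) hX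
    refine (abs_le_of_sq_le_sq' ?_ (add_nonneg hp hq)).2
    have h1 : (a * s) ^ 2 * τ ^ 2 ≤ (a * s) ^ 2 * ((sq3 b - g ^ 2) * X) :=
      mul_le_mul_of_nonneg_left hort (sq_nonneg _)
    have h2 : (a * s) ^ 2 * ((sq3 b - g ^ 2) * X)
        = ((C ^ 2 - a ^ 2) * s ^ 2) * ((C ^ 2 - sq3 b) * X) := by
      linear_combination (-(s ^ 2 * X)) * hroot
    nlinarith [sq_nonneg ((C ^ 2 - a ^ 2) * s ^ 2 - (C ^ 2 - sq3 b) * X)]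
  have hMle : sq3 M ≤ C ^ 2 * (s ^ 2 + sq3 c) := by
    have h1 : sq3 M = (a * s + τ) ^ 2 + g ^ 2 * X := by
      rw [hM, ht, hτ, hXdef]; ring
    have h2 : C ^ 2 * X ≤ C ^ 2 * sq3 c :=
      mul_le_mul_of_nonneg_left (by rw [hXdef]; linarith [sq_nonneg (dot3 x c)]) (sq_nonneg C)
    rw [h1]
    nlinarith
  rw [hform]
  have hc := sq3_nonneg c
  have hw := sq3_nonneg w
  refine abs_le_of_sq_le_sq ?_ (by positivity)
  calc dot3 w M ^ 2 ≤ sq3 w * sq3 M := dot3_sq_le w M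
    _ ≤ sq3 w * (C ^ 2 * (s ^ 2 + sq3 c)) := mul_le_mul_of_nonneg_left hMle hw
    _ ≤ (C * ((sq3 c + sq3 w + s ^ 2) / 2)) ^ 2 := by
      nlinarith [mul_nonneg (sq_nonneg C) (sq_nonneg (sq3 w - (s ^ 2 + sq3 c)))]

/-- The larger root of `l ^ 2 - (A + b) * l + A * h = 0` when `0 ≤ A` and `h ≤ b`. -/
lemma larger_root_spec {A b h : ℝ} (hA : 0 ≤ A) (hh : h ≤ b) :
    let l := (A + b + √((A + b) ^ 2 - 4 * A * h)) / 2
    A ≤ l ∧ b ≤ l ∧ (l - A) * (l - b) = A * (b - h) := by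
  intro l
  have hAh : 0 ≤ A * (b - h) := mul_nonneg hA (by linarith)
  have hD : (A - b) ^ 2 ≤ (A + b) ^ 2 - 4 * A * h := by nlinarith
  have hr : √((A + b) ^ 2 - 4 * A * h) ^ 2 = (A + b) ^ 2 - 4 * A * h :=
    Real.sq_sqrt ((sq_nonneg _).trans hD)
  have habs := abs_le.mp (Real.abs_le_sqrt hD)
  simp only [l]
  refine ⟨by linarith, by linarith, ?_⟩
  linear_combination hr / 4

/-- Extension of a direction in `ℝ^d`, `d ≤ 3`, to `ℝ³` by zero. -/
def extendDir {d : ℕ} (ξ : Fin d → ℝ) : Fin 3 → ℝ :=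
  fun j => if h : (j : ℕ) < d then ξ ⟨j, h⟩ else 0

lemma sum_castLE_smul {E : Type*} [AddCommGroup E] [Module ℝ E] {d : ℕ} (hd : d ≤ 3)
    (ξ : Fin d → ℝ) (f : Fin 3 → E) :
    ∑ k, ξ k • f (Fin.castLE hd k) = ∑ j, extendDir ξ j • f j := by
  interval_cases d <;> simp [extendDir, Fin.sum_univ_succ]

lemma dirDot_eq {d : ℕ} (hd : d ≤ 3) (ξ : Fin d → ℝ) (w : Fin 3 → ℝ) :
    dirDot hd ξ w = dot3 (extendDir ξ) w := by
  simpa only [smul_eq_mul, dirDot, dot3] using sum_castLE_smul hd ξ w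

lemma dirFlux_eq (pfun : ℝ → ℝ → ℝ) {d : ℕ} (hd : d ≤ 3) (ξ : Fin d → ℝ) (U : MHDState) :
    dirFlux pfun hd ξ U = ∑ j, extendDir ξ j • flux pfun j U :=
  sum_castLE_smul hd ξ fun j => flux pfun j U

lemma sq3_extendDir {d : ℕ} (hd : d ≤ 3) {ξ : Fin d → ℝ} (hξ : unitVec ξ) :
    sq3 (extendDir ξ) = 1 := by
  have h := sum_castLE_smul hd ξ (extendDir ξ)
  simp only [smul_eq_mul] at h
  rw [sq3, dot3, ← h, ← hξ]
  refine Finset.sum_congr rfl fun k _ => ?_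
  simp [extendDir, pow_two]

/-- The energy `|θ|²` relative to the reference state `(v*, B*)`. -/
def relEnergy (U : MHDState) (vs Bs : Fin 3 → ℝ) : ℝ :=
  (sq3 (magB U - Bs) + dens U * sq3 (vel U - vs)) / 2 + intE U

lemma dot8_nstar_add {U : MHDState} (hU : 0 < dens U) (vs Bs : Fin 3 → ℝ) :
    dot8 U (nstar vs Bs) + sq3 Bs / 2 = relEnergy U vs Bs := by
  have h : U 0 ≠ 0 := hU.ne'
  simp [relEnergy, dot8, nstar, mk, sq3, dot3, Fin.sum_univ_succ, intE, toten, mom, magB, vel,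
    dens]
  field_simp
  ring

lemma dot8_dirFlux_nstar (pfun : ℝ → ℝ → ℝ) {d : ℕ} (hd : d ≤ 3) (ξ : Fin d → ℝ)
    {U : MHDState} (hU : 0 < dens U) (vs Bs : Fin 3 → ℝ) :
    dot8 (dirFlux pfun hd ξ U) (nstar vs Bs)
      = dirDot hd ξ (vel U) * relEnergy U vs Bs
        + (pres pfun U * dirDot hd ξ (vel U - vs)
          + dot3 (magB U) (magB U - Bs) * dirDot hd ξ (vel U - vs)
          - dirDot hd ξ (magB U) * dot3 (vel U - vs) (magB U - Bs))
        - sq3 (magB U - Bs) / 2 * dirDot hd ξ (vel U - vs)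
        + dirDot hd ξ (magB U) * dot3 vs Bs - dirDot hd ξ vs * (sq3 Bs / 2) := by
  have h : U 0 ≠ 0 := hU.ne'
  simp only [dirDot_eq, dirFlux_eq, ptot, flux]
  generalize extendDir ξ = x, pres pfun U = p
  simp [relEnergy, dot8, nstar, mk, sq3, dot3, Fin.sum_univ_succ, intE, toten, mom, magB, vel,
    dens]
  field_simp
  ring

lemma dens_dirFlux (pfun : ℝ → ℝ → ℝ) {d : ℕ} (hd : d ≤ 3) (ξ : Fin d → ℝ) (U : MHDState) :
    dens (dirFlux pfun hd ξ U) = dens U * dirDot hd ξ (vel U) := by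
  simp only [dirDot_eq, dirFlux_eq, flux]
  simp [dot3, mk, dens, Fin.sum_univ_succ]
  ring

section Admissible

variable {pfun : ℝ → ℝ → ℝ} {d : ℕ} (hd : d ≤ 3) {ξ : Fin d → ℝ} {U : MHDState}

lemma waveC_spec (hξ : unitVec ξ) (hU : U ∈ Gset) :
    soundC pfun U ^ 2 ≤ waveC pfun hd ξ U ^ 2 ∧
      sq3 (magB U) / dens U ≤ waveC pfun hd ξ U ^ 2 ∧
      (waveC pfun hd ξ U ^ 2 - soundC pfun U ^ 2) *
          (waveC pfun hd ξ U ^ 2 - sq3 (magB U) / dens U)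
        = soundC pfun U ^ 2 *
          (sq3 (magB U) / dens U - dirDot hd ξ (magB U) ^ 2 / dens U) := by
  have hle : dirDot hd ξ (magB U) ^ 2 / dens U ≤ sq3 (magB U) / dens U := by
    have h := dot3_sq_le (extendDir ξ) (magB U)
    rw [sq3_extendDir hd hξ, one_mul] at h
    rw [dirDot_eq]
    exact div_le_div_of_nonneg_right h hU.1.le
  have h := larger_root_spec (sq_nonneg (soundC pfun U)) hle
  simp only [← mul_div_assoc] at h
  have hw : waveC pfun hd ξ U ^ 2 = _ := Real.sq_sqrt ((sq_nonneg _).trans h.1)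
  rw [hw]
  simpa only [← mul_div_assoc] using h

lemma soundC_pos (hEOS : IsEOS pfun) (hU : U ∈ Gset) : 0 < soundC pfun U := by
  have he : 0 < specE U := div_pos hU.2 hU.1
  have hp : 0 < pres pfun U := (hEOS _ _ hU.1).1 he
  have hd := hU.1
  unfold soundC
  positivity

lemma waveC_pos (hEOS : IsEOS pfun) (hξ : unitVec ξ) (hU : U ∈ Gset) :
    0 < waveC pfun hd ξ U := by
  have h := (waveC_spec (pfun := pfun) hd hξ hU).1
  exact (soundC_pos hEOS hU).trans_le
    ((pow_le_pow_iff_left₀ (soundC_pos hEOS hU).le (Real.sqrt_nonneg _) two_ne_zero).1 h)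

lemma abs_wave_form_le (hξ : unitVec ξ) (hU : U ∈ Gset) (vs Bs : Fin 3 → ℝ) :
    |pres pfun U * dirDot hd ξ (vel U - vs)
          + dot3 (magB U) (magB U - Bs) * dirDot hd ξ (vel U - vs)
          - dirDot hd ξ (magB U) * dot3 (vel U - vs) (magB U - Bs)|
      ≤ waveC pfun hd ξ U * relEnergy U vs Bs := by
  obtain ⟨h1, h2, h3⟩ := waveC_spec (pfun := pfun) hd hξ hU
  have hr := hU.1
  have hi := hU.2
  set r := √(dens U) with hrdef
  have hr0 : 0 < r := Real.sqrt_pos.2 hr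
  have hr2 : r ^ 2 = dens U := Real.sq_sqrt hr.le
  have hs2 : √(2 * intE U) ^ 2 = 2 * intE U := Real.sq_sqrt (by linarith)
  have hs0 : 0 < √(2 * intE U) := Real.sqrt_pos.2 (by linarith)
  have hpres : soundC pfun U * √(2 * intE U) * r = pres pfun U := by
    have : √(2 * specE U) = √(2 * intE U) / r := by
      rw [specE, ← mul_div_assoc, Real.sqrt_div (by linarith)]
    rw [soundC, this, ← hr2]
    field_simp
  have hsqb : sq3 (r⁻¹ • magB U) = sq3 (magB U) / dens U := by
    rw [← hr2]
    simp only [sq3, dot3, Fin.sum_univ_three, Pi.smul_apply, smul_eq_mul]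
    field_simp
  have hdot : ∀ (k : ℝ) (u v : Fin 3 → ℝ), dot3 u (k • v) = k * dot3 u v := by
    intro k u v
    simp only [dot3, Fin.sum_univ_three, Pi.smul_apply, smul_eq_mul]
    ring
  have hdot' : ∀ (k : ℝ) (u v : Fin 3 → ℝ), dot3 (k • u) v = k * dot3 u v := by
    intro k u v
    simp only [dot3, Fin.sum_univ_three, Pi.smul_apply, smul_eq_mul]
    ring
  have hfast := fast_wave_form_le (sq3_extendDir hd hξ) (soundC pfun U) (√(2 * intE U))
    (waveC pfun hd ξ U) (r⁻¹ • magB U) (magB U - Bs) (r • (vel U - vs)) (Real.sqrt_nonneg _) h1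
    (by rwa [hsqb]) (by
      rw [hsqb, h3, hdot, dirDot_eq, mul_pow, inv_pow, hr2]
      field_simp)
  have hsqw : sq3 (r • (vel U - vs)) = dens U * sq3 (vel U - vs) := by
    rw [sq3, hdot, hdot', ← hr2, sq3]
    ring
  rw [hsqw, hs2, hdot, hdot, hdot', hdot'] at hfast
  simp only [dirDot_eq]
  convert hfast using 2
  · rw [← hpres]
    field_simp
  · rw [relEnergy]
    ring

end Admissible

lemma mul_add_add_le_sq (a c b d : ℝ) :
    (a + c) * (b + d) ≤ a ^ 2 + b ^ 2 + (c ^ 2 + d ^ 2) := by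
  nlinarith [sq_nonneg (a + c - (b + d)), sq_nonneg (a - c), sq_nonneg (b - d)]

/-- The difference of magnetic energies, transported by the reference velocity. -/
lemma transported_energy_le {d : ℕ} (hd : d ≤ 3) {ξ : Fin d → ℝ} (hξ : unitVec ξ)
    {U Ut : MHDState} (hU : U ∈ Gset) (hUt : Ut ∈ Gset) (vs Bs : Fin 3 → ℝ) :
    dirDot hd ξ vs * (sq3 (magB U - Bs) / 2 - sq3 (magB Ut - Bs) / 2)
      ≤ dirDot hd ξ (roeV U Ut) * (sq3 (magB U - Bs) / 2 - sq3 (magB Ut - Bs) / 2)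
        + norm3 (magB U - magB Ut) / (√(dens U) + √(dens Ut))
          * (relEnergy U vs Bs + relEnergy Ut vs Bs) := by
  have hi := hU.2
  have hi' := hUt.2
  set r := √(dens U) with hrdef
  set r' := √(dens Ut) with hrdef'
  have hr0 : 0 < r := Real.sqrt_pos.2 hU.1
  have hr0' : 0 < r' := Real.sqrt_pos.2 hUt.1
  have hr2 : r ^ 2 = dens U := Real.sq_sqrt hU.1.le
  have hr2' : r' ^ 2 = dens Ut := Real.sq_sqrt hUt.1.le
  set w := vel U - vs with hw
  set w' := vel Ut - vs with hw'
  set c := magB U - Bs with hc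
  set c' := magB Ut - Bs with hc'
  have hBB : magB U - magB Ut = c - c' := by rw [hc, hc']; abel
  rw [hBB]
  have hroe : dirDot hd ξ vs = dirDot hd ξ (roeV U Ut)
      - (r * dirDot hd ξ w + r' * dirDot hd ξ w') / (r + r') := by
    simp only [dirDot_eq, dot3, Fin.sum_univ_three, roeV, hw, hw', Pi.sub_apply, ← hrdef,
      ← hrdef']
    field_simp
    ring
  have hdiff : sq3 c - sq3 c' = dot3 (c - c') c + dot3 (c - c') c' := by
    simp only [sq3, dot3, Fin.sum_univ_three, Pi.sub_apply]
    ring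
  have hdir : ∀ u, |dirDot hd ξ u| ≤ norm3 u := by
    intro u
    have h := abs_dot3_le (extendDir ξ) u
    have h1 : norm3 (extendDir ξ) = 1 := by rw [norm3, sq3_extendDir hd hξ, Real.sqrt_one]
    rwa [h1, one_mul, ← dirDot_eq hd] at h
  have hX : |r * dirDot hd ξ w + r' * dirDot hd ξ w'| ≤ r * norm3 w + r' * norm3 w' := by
    refine (abs_add_le _ _).trans ?_
    rw [abs_mul, abs_mul, abs_of_pos hr0, abs_of_pos hr0']
    gcongr <;> exact hdir _
  have hY : |sq3 c - sq3 c'| ≤ norm3 (c - c') * (norm3 c + norm3 c') := by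
    rw [hdiff, mul_add]
    exact (abs_add_le _ _).trans (add_le_add (abs_dot3_le _ _) (abs_dot3_le _ _))
  have hXY : -((r * dirDot hd ξ w + r' * dirDot hd ξ w') * (sq3 c - sq3 c'))
      ≤ (r * norm3 w + r' * norm3 w') * (norm3 (c - c') * (norm3 c + norm3 c')) := by
    refine (neg_le_abs _).trans ?_
    rw [abs_mul]
    exact mul_le_mul hX hY (abs_nonneg _) ((abs_nonneg _).trans hX)
  have hE : (r * norm3 w + r' * norm3 w') * (norm3 c + norm3 c')
      ≤ 2 * (relEnergy U vs Bs + relEnergy Ut vs Bs) := by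
    refine (mul_add_add_le_sq _ _ _ _).trans ?_
    rw [mul_pow, mul_pow, sq_norm3, sq_norm3, sq_norm3, sq_norm3, hr2, hr2', relEnergy,
      relEnergy]
    linarith
  have hfin : -((r * dirDot hd ξ w + r' * dirDot hd ξ w') * (sq3 c - sq3 c'))
      ≤ 2 * (norm3 (c - c') * (relEnergy U vs Bs + relEnergy Ut vs Bs)) := by
    nlinarith [mul_le_mul_of_nonneg_left hE (norm3_nonneg (c - c'))]
  have hdiv := div_le_div_of_nonneg_right hfin (by positivity : 0 ≤ 2 * (r + r'))
  rw [hroe]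
  have e1 : -((r * dirDot hd ξ w + r' * dirDot hd ξ w') * (sq3 c - sq3 c')) / (2 * (r + r'))
      = -((r * dirDot hd ξ w + r' * dirDot hd ξ w') / (r + r'))
          * (sq3 c / 2 - sq3 c' / 2) := by
    field_simp
  have e2 : 2 * (norm3 (c - c') * (relEnergy U vs Bs + relEnergy Ut vs Bs)) / (2 * (r + r'))
      = norm3 (c - c') / (r + r') * (relEnergy U vs Bs + relEnergy Ut vs Bs) := by
    field_simp
  rw [e1, e2] at hdiv
  linarith

lemma roeV_comm (U Ut : MHDState) : roeV U Ut = roeV Ut U := by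
  funext k
  simp only [roeV, add_comm]

/-- Splitting of the relative energy, advected at two different signed speeds. -/
lemma advected_energy_le {U : MHDState} (hU : U ∈ Gset) (vs Bs : Fin 3 → ℝ) {u u' m : ℝ}
    (hu : u ≤ m) (hu' : u' ≤ m) :
    u * (relEnergy U vs Bs - sq3 (magB U - Bs) / 2) + u' * (sq3 (magB U - Bs) / 2)
      ≤ m * relEnergy U vs Bs := by
  have h1 : 0 ≤ relEnergy U vs Bs - sq3 (magB U - Bs) / 2 := by
    have := mul_nonneg hU.1.le (sq3_nonneg (vel U - vs))
    have := hU.2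
    rw [relEnergy]
    linarith
  have h2 := sq3_nonneg (magB U - Bs)
  nlinarith [mul_le_mul_of_nonneg_right hu h1, mul_le_mul_of_nonneg_right hu' h2]

lemma mem_closure_GstarSet {U : MHDState} (hU : 0 < dens U)
    (h : ∀ vs Bs : Fin 3 → ℝ, 0 ≤ dot8 U (nstar vs Bs) + sq3 Bs / 2) :
    U ∈ closure GstarSet := by
  have hlim : Filter.Tendsto (fun ε : ℝ => U + ε • (Pi.single 7 1 : MHDState))
      (nhdsWithin 0 (Set.Ioi 0)) (nhds U) := by
    have hc : Continuous fun ε : ℝ => U + ε • (Pi.single 7 1 : MHDState) := by fun_prop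
    have := (hc.tendsto 0).mono_left (nhdsWithin_le_nhds (s := Set.Ioi (0 : ℝ)))
    simpa using this
  refine mem_closure_of_tendsto hlim ?_
  filter_upwards [self_mem_nhdsWithin] with ε hε
  have hε' : 0 < ε := hε
  refine ⟨by simpa [dens] using hU, fun vs Bs => ?_⟩
  have hdot : dot8 (U + ε • (Pi.single 7 1 : MHDState)) (nstar vs Bs)
      = dot8 U (nstar vs Bs) + ε := by
    simp [dot8, add_mul, Finset.sum_add_distrib, Pi.single_apply, nstar, mk]
  rw [hdot]
  linarith [h vs Bs]

lemma dot8_lf_combination (k a b : ℝ) (U F V G n : MHDState) :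
    dot8 (k • (a • U - F + b • V + G)) n
      = k * (a * dot8 U n - dot8 F n + b * dot8 V n + dot8 G n) := by
  simp only [dot8, Pi.smul_apply, Pi.add_apply, Pi.sub_apply, smul_eq_mul, Finset.mul_sum,
    ← Finset.sum_add_distrib, ← Finset.sum_sub_distrib]
  exact Finset.sum_congr rfl fun i _ => by ring

/-- The two-state estimate in terms of relative energies, before normalising by `α + α̃`. -/
lemma lf_energy_balance {pfun : ℝ → ℝ → ℝ} {d : ℕ} (hd : d ≤ 3) {ξ : Fin d → ℝ}
    (hξ : unitVec ξ) {U Ut : MHDState} (hU : U ∈ Gset) (hUt : Ut ∈ Gset) {α αt : ℝ}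
    (hα : alphaS pfun hd ξ U Ut ≤ α) (hαt : alphaS pfun hd ξ Ut U ≤ αt)
    (vs Bs : Fin 3 → ℝ) :
    0 ≤ α * relEnergy U vs Bs - dot8 (dirFlux pfun hd ξ U) (nstar vs Bs)
      + αt * relEnergy Ut vs Bs + dot8 (dirFlux pfun hd ξ Ut) (nstar vs Bs)
      + dot3 vs Bs * (dirDot hd ξ (magB U) - dirDot hd ξ (magB Ut)) := by
  have hsub : ∀ V : MHDState,
      dirDot hd ξ (vel V - vs) = dirDot hd ξ (vel V) - dirDot hd ξ vs := by
    intro V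
    simp only [dirDot, Pi.sub_apply, mul_sub, Finset.sum_sub_distrib]
  have hnn : ∀ V ∈ Gset, 0 ≤ relEnergy V vs Bs := by
    intro V hV
    have := mul_nonneg hV.1.le (sq3_nonneg (vel V - vs))
    have := sq3_nonneg (magB V - Bs)
    have := hV.2
    rw [relEnergy]
    linarith
  have hwave := (abs_le.1 (abs_wave_form_le (pfun := pfun) hd hξ hU vs Bs)).2
  have hwave' := (abs_le.1 (abs_wave_form_le (pfun := pfun) hd hξ hUt vs Bs)).1
  have htr := transported_energy_le hd hξ hU hUt vs Bs
  have hadv := advected_energy_le hU vs Bs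
    ((le_abs_self _).trans (le_max_left |dirDot hd ξ (vel U)| |dirDot hd ξ (roeV U Ut)|))
    ((le_abs_self _).trans (le_max_right _ _))
  have hadv' := advected_energy_le hUt vs Bs
    ((neg_le_abs _).trans (le_max_left |dirDot hd ξ (vel Ut)| |dirDot hd ξ (roeV U Ut)|))
    ((neg_le_abs _).trans (le_max_right _ _))
  have hα1 := mul_le_mul_of_nonneg_right hα (hnn U hU)
  have hα2 := mul_le_mul_of_nonneg_right hαt (hnn Ut hUt)
  rw [alphaS] at hα1
  rw [alphaS, roeV_comm Ut U, norm3_sub_comm, add_comm (√(dens Ut))] at hα2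
  rw [dot8_dirFlux_nstar pfun hd ξ hU.1, dot8_dirFlux_nstar pfun hd ξ hUt.1]
  have e1 : sq3 (magB U - Bs) / 2 * dirDot hd ξ (vel U - vs)
      = sq3 (magB U - Bs) / 2 * (dirDot hd ξ (vel U) - dirDot hd ξ vs) := by rw [hsub]
  have e2 : sq3 (magB Ut - Bs) / 2 * dirDot hd ξ (vel Ut - vs)
      = sq3 (magB Ut - Bs) / 2 * (dirDot hd ξ (vel Ut) - dirDot hd ξ vs) := by rw [hsub]
  rw [e1, e2]
  linarith

lemma abs_dirDot_vel_lt {pfun : ℝ → ℝ → ℝ} (hEOS : IsEOS pfun) {d : ℕ} (hd : d ≤ 3)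
    {ξ : Fin d → ℝ} (hξ : unitVec ξ) {U Ut : MHDState} (hU : U ∈ Gset) {α : ℝ}
    (hα : alphaS pfun hd ξ U Ut ≤ α) : |dirDot hd ξ (vel U)| < α := by
  have h1 := waveC_pos hd hEOS hξ hU
  have h2 : 0 ≤ norm3 (magB U - magB Ut) / (√(dens U) + √(dens Ut)) :=
    div_nonneg (norm3_nonneg _) (add_nonneg (Real.sqrt_nonneg _) (Real.sqrt_nonneg _))
  have h3 := le_max_left |dirDot hd ξ (vel U)| |dirDot hd ξ (roeV U Ut)|
  rw [alphaS] at hα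
  linarith

/-- Corollary 2.5 (two-state Lax–Friedrichs-type estimate). -/
theorem two_state_lf_estimate (pfun : ℝ → ℝ → ℝ) (hEOS : IsEOS pfun)
    {d : ℕ} (hd1 : 1 ≤ d) (hd : d ≤ 3) (ξ : Fin d → ℝ) (hξ : unitVec ξ)
    (U Ut : MHDState) (hU : U ∈ Gset) (hUt : Ut ∈ Gset)
    (α αt : ℝ) (hα : alphaS pfun hd ξ U Ut ≤ α) (hαt : alphaS pfun hd ξ Ut U ≤ αt) :
    0 < α + αt ∧
      ∀ Ubar : MHDState,
        Ubar = (α + αt)⁻¹ •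
            (α • U - dirFlux pfun hd ξ U + αt • Ut + dirFlux pfun hd ξ Ut) →
        Ubar ∈ Grho ∧
          (∀ vs Bs : Fin 3 → ℝ,
            0 ≤ dot8 Ubar (nstar vs Bs) + sq3 Bs / 2
              + dot3 vs Bs * (α + αt)⁻¹ *
                (dirDot hd ξ (magB U) - dirDot hd ξ (magB Ut))) ∧
          (dirDot hd ξ (magB U) = dirDot hd ξ (magB Ut) → Ubar ∈ closure GstarSet) := by
  have hlt := abs_dirDot_vel_lt hEOS hd hξ hU hα
  have hlt' := abs_dirDot_vel_lt hEOS hd hξ hUt hαt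
  have hpos : 0 < α + αt := by
    linarith [abs_nonneg (dirDot hd ξ (vel U)), abs_nonneg (dirDot hd ξ (vel Ut))]
  refine ⟨hpos, ?_⟩
  rintro _ rfl
  set Ubar : MHDState :=
    (α + αt)⁻¹ • (α • U - dirFlux pfun hd ξ U + αt • Ut + dirFlux pfun hd ξ Ut) with hUbar
  have hdens : 0 < dens Ubar := by
    have e : dens Ubar = (α + αt)⁻¹ * (dens U * (α - dirDot hd ξ (vel U))
        + dens Ut * (αt + dirDot hd ξ (vel Ut))) := by
      have h1 := dens_dirFlux pfun hd ξ U
      have h2 := dens_dirFlux pfun hd ξ Ut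
      simp only [dens] at h1 h2
      simp only [hUbar, dens, Pi.smul_apply, Pi.add_apply, Pi.sub_apply, smul_eq_mul, h1, h2]
      ring
    rw [e]
    exact mul_pos (inv_pos.2 hpos) (add_pos
      (mul_pos hU.1 (by linarith [le_abs_self (dirDot hd ξ (vel U))]))
      (mul_pos hUt.1 (by linarith [neg_le_abs (dirDot hd ξ (vel Ut))])))
  have hmain : ∀ vs Bs : Fin 3 → ℝ,
      0 ≤ dot8 Ubar (nstar vs Bs) + sq3 Bs / 2
        + dot3 vs Bs * (α + αt)⁻¹ * (dirDot hd ξ (magB U) - dirDot hd ξ (magB Ut)) := by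
    intro vs Bs
    have h := mul_nonneg (inv_pos.2 hpos).le (lf_energy_balance hd hξ hU hUt hα hαt vs Bs)
    rw [← dot8_nstar_add hU.1, ← dot8_nstar_add hUt.1] at h
    rw [hUbar, dot8_lf_combination]
    refine h.trans_eq ?_
    field_simp
    ring
  refine ⟨hdens, hmain, fun hB => mem_closure_GstarSet hdens fun vs Bs => ?_⟩
  simpa only [hB, sub_self, mul_zero, add_zero] using hmain vs Bs
end MHD
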